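/- Let V and V' be finite-dimensional ℂ-vector spaces, each equipped with an increasing exhaustive and separated filtration W by subspaces and two decreasing exhaustive and separated filtrations F and F̄ by subspaces. Suppose V' is a direct factor of V compatibly with the filtrations: there are linear maps u : V' → V and r : V → V' with r ∘ u = id_{V'} such that u and r map each filtration step into the corresponding filtration step (u(W_m V') ⊆ W_m V, u(F^p V') ⊆ F^p V, u(F̄^p V') ⊆ F̄^p V, and similarly for r). If the three filtrations (W, F, F̄) on V are opposed, then the three filtrations (W, F, F̄) on V' are opposed. -/

import Mathlib

/-- A trifiltered finite-dimensional `ℂ`-vector space: an increasing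
exhaustive and separated filtration `W` together with two decreasing
exhaustive and separated filtrations `F` and `F̄` by subspaces. -/
structure Trifiltered (V : Type*) [AddCommGroup V] [Module ℂ V] where
  W : ℤ → Submodule ℂ V
  F : ℤ → Submodule ℂ V
  Fbar : ℤ → Submodule ℂ V
  W_mono : Monotone W
  F_anti : Antitone F
  Fbar_anti : Antitone Fbar
  W_separated : ∃ m, W m = ⊥
  W_exhaustive : ∃ m, W m = ⊤
  F_exhaustive : ∃ p, F p = ⊤
  F_separated : ∃ p, F p = ⊥
  Fbar_exhaustive : ∃ p, Fbar p = ⊤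
  Fbar_separated : ∃ p, Fbar p = ⊥

namespace Trifiltered

variable {V : Type*} [AddCommGroup V] [Module ℂ V] (T : Trifiltered V)

/-- The subspace `F^p Gr^W_n V` of `Gr^W_n V = W_n V / W_{n-1} V`, realized as
the image of `F^p V ∩ W_n V` in the quotient `V / W_{n-1} V` (inside which
`Gr^W_n V` sits as the image of `W_n V`). -/
def FGrW (p n : ℤ) : Submodule ℂ (V ⧸ T.W (n - 1)) :=
  (T.F p ⊓ T.W n).map (T.W (n - 1)).mkQ

/-- The subspace `F̄^q Gr^W_n V` of `Gr^W_n V = W_n V / W_{n-1} V`. -/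
def FbarGrW (q n : ℤ) : Submodule ℂ (V ⧸ T.W (n - 1)) :=
  (T.Fbar q ⊓ T.W n).map (T.W (n - 1)).mkQ

/-- Vanishing of the triple graded piece `Gr^q_{F̄} Gr^p_F Gr^W_n V`.
Here `Gr^p_F Gr^W_n V = F^p Gr^W_n V / F^{p+1} Gr^W_n V` carries the
filtration induced by `F̄`, whose `q`-th step is the image of
`F̄^q Gr^W_n V ∩ F^p Gr^W_n V`; its `q`-th graded piece vanishes exactly when
`F̄^q Gr^W_n ∩ F^p Gr^W_n ⊆ (F̄^{q+1} Gr^W_n ∩ F^p Gr^W_n) + F^{p+1} Gr^W_n`. -/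
def GrPieceVanishes (n p q : ℤ) : Prop :=
  T.FbarGrW q n ⊓ T.FGrW p n ≤ (T.FbarGrW (q + 1) n ⊓ T.FGrW p n) ⊔ T.FGrW (p + 1) n

/-- The three filtrations `(W, F, F̄)` are *opposed* if
`Gr^q_{F̄} Gr^p_F Gr^W_n V = 0` whenever `n ≠ p + q`. -/
def Opposed : Prop :=
  ∀ n p q : ℤ, n ≠ p + q → T.GrPieceVanishes n p q

end Trifiltered

theorem Trifiltered.aux_map_mem {V V' : Type*} [AddCommGroup V] [Module ℂ V]
    [AddCommGroup V'] [Module ℂ V'] (A B C : Submodule ℂ V) (A' B' C' : Submodule ℂ V')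
    (f : V →ₗ[ℂ] V') (hA : A.map f ≤ A') (hB : B.map f ≤ B') (hC : C ≤ C'.comap f)
    (x : V ⧸ C) (hx : x ∈ (A ⊓ B).map C.mkQ) :
    C.mapQ C' f hC x ∈ (A' ⊓ B').map C'.mkQ := by
  obtain ⟨a, ⟨ha, hb⟩, rfl⟩ := hx
  exact ⟨f a, ⟨hA ⟨a, ha, rfl⟩, hB ⟨a, hb, rfl⟩⟩, rfl⟩

/-- Opposedness of the three filtrations passes to direct factors: if `V'` is a
direct factor of `V` compatibly with the filtrations (via `u : V' → V` and a
retraction `r : V → V'` with `r ∘ u = id`, both mapping each filtration step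
into the corresponding one), and the three filtrations on `V` are opposed, then
so are the three filtrations on `V'`.  (Step in the proof of Theorem 5.2.1.) -/
theorem Trifiltered.opposed_of_directFactor
    {V V' : Type*}
    [AddCommGroup V] [Module ℂ V] [FiniteDimensional ℂ V]
    [AddCommGroup V'] [Module ℂ V'] [FiniteDimensional ℂ V']
    (T : Trifiltered V) (T' : Trifiltered V')
    (u : V' →ₗ[ℂ] V) (r : V →ₗ[ℂ] V') (hru : r ∘ₗ u = LinearMap.id)
    (huW : ∀ m : ℤ, (T'.W m).map u ≤ T.W m)
    (huF : ∀ p : ℤ, (T'.F p).map u ≤ T.F p)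
    (huFbar : ∀ p : ℤ, (T'.Fbar p).map u ≤ T.Fbar p)
    (hrW : ∀ m : ℤ, (T.W m).map r ≤ T'.W m)
    (hrF : ∀ p : ℤ, (T.F p).map r ≤ T'.F p)
    (hrFbar : ∀ p : ℤ, (T.Fbar p).map r ≤ T'.Fbar p)
    (hT : T.Opposed) : T'.Opposed := by
  intro n p q hn x hx
  have hu : T'.W (n - 1) ≤ (T.W (n - 1)).comap u := Submodule.map_le_iff_le_comap.1 (huW _)
  have hr : T.W (n - 1) ≤ (T'.W (n - 1)).comap r := Submodule.map_le_iff_le_comap.1 (hrW _)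
  have h1 := hT n p q hn
    (show (T'.W (n - 1)).mapQ (T.W (n - 1)) u hu x ∈ _ from
      ⟨aux_map_mem _ _ _ _ _ _ u (huFbar q) (huW n) hu x hx.1,
       aux_map_mem _ _ _ _ _ _ u (huF p) (huW n) hu x hx.2⟩)
  obtain ⟨y, hy, z, hz, hyz⟩ := Submodule.mem_sup.1 h1
  have hx' : (T.W (n - 1)).mapQ (T'.W (n - 1)) r hr
      ((T'.W (n - 1)).mapQ (T.W (n - 1)) u hu x) = x := by
    obtain ⟨a, rfl⟩ := Submodule.mkQ_surjective _ x
    have : r (u a) = a := LinearMap.congr_fun hru a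
    simp [this]
  rw [← hx', ← hyz, map_add]
  exact Submodule.add_mem_sup
    ⟨aux_map_mem _ _ _ _ _ _ r (hrFbar (q + 1)) (hrW n) hr y hy.1,
     aux_map_mem _ _ _ _ _ _ r (hrF p) (hrW n) hr y hy.2⟩
    (aux_map_mem _ _ _ _ _ _ r (hrF (p + 1)) (hrW n) hr z hz)
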